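/- Let k ≥ 1 with n_k = 2. Then for every L with |p_{k−1}| + 2 ≤ L ≤ |p_k| + 1, the complexity is C(L) = (#A_{k+1} − 1)·L + (#A_{k−1} − #A_{k+1})·(|p_{k−1}| + 1) + 𝟙_{A_k}(a_{k−1})·T(L), where T(L) = L − |p_{k−1}| + |p_{k−2}| if |p_{k−1}| + 2 ≤ L ≤ |p_k| − |p_{k−2}|, and T(L) = |p_{k−1}| + 1 if |p_k| − |p_{k−2}| + 1 ≤ L ≤ |p_k| + 1. -/

import Mathlib

/-!
All blocks are prefixes of one infinite word, whose letter at position `i ≥ 1` is `a l` for the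
least `l` such that `n 0 ⋯ n l` does not divide `i`; the language consists of its factors.

Put `m = |p (k-1)| + 1` and `e = |p (k-2)| + 1`, so that `m + 1 ≤ L ≤ 2 m`. Away from its holes, the
multiples of `m`, the word repeats `p (k-1)`; because `n k = 2`, the letters in consecutive holes
are alternately `a k` and an arbitrary letter of `A (k+1)`. So a factor of length `L` is the factor
at some offset `s < m` of `p (k-1) c p (k-1) d p (k-1)`, where one of `c`, `d` is `a k` and the
other lies in `A (k+1)`. It always sees the hole of `c`, and it sees that of `d` if and only if
`s ≥ 2 m - L`.

If two such factors are equal, their offsets agree modulo `e`, since on each lower level a letter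
`a (j+1)` would otherwise face a letter `a j`. If moreover their offsets differ, every visible hole
faces, and hence carries, the letter `a (k-1)`. As `a k ≠ a (k-1)`, this is impossible with two
visible holes. With a single one it does happen: `p (k-1) (a (k-1)) p (k-1)` has period `e`. Hence
the number of factors is
`(2 m - L) #(A k \ {a (k-1)}) + min (2 m - L) e #(A k ∩ {a (k-1)}) + (L - m) #{(c, d)}`,
and there are `#(A k) + #(A (k+1)) - 1` pairs `(c, d)`.
-/

open Filter

/-- The blocks `p k` of the simple Toeplitz subshift coded by `a` and `n`:
`p 0 = a 0 ^ (n 0 - 1)` and `p (k+1)` consists of `n (k+1)` copies of `p k`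
separated by `n (k+1) - 1` single letters `a (k+1)`. -/
def ToeplitzBlock {A : Type*} (a : ℕ → A) (n : ℕ → ℕ) : ℕ → List A
  | 0 => List.replicate (n 0 - 1) (a 0)
  | k + 1 => List.intercalate [a (k + 1)] (List.replicate (n (k + 1)) (ToeplitzBlock a n k))

/-- `lenPrev a n k = |p (k-1)|`, with the convention `|p (-1)| = 0`. -/
def lenPrev {A : Type*} (a : ℕ → A) (n : ℕ → ℕ) : ℕ → ℕ
  | 0 => 0
  | k + 1 => (ToeplitzBlock a n k).length

/-- The language of the simple Toeplitz subshift: all finite words occurring as a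
factor of some block `p k`. -/
def ToeplitzLang {A : Type*} (a : ℕ → A) (n : ℕ → ℕ) : Set (List A) :=
  {u | ∃ k, u <:+: ToeplitzBlock a n k}

/-- The complexity function `C L`. -/
noncomputable def cmpl {A : Type*} (a : ℕ → A) (n : ℕ → ℕ) (L : ℕ) : ℕ :=
  Set.ncard {u | u ∈ ToeplitzLang a n ∧ u.length = L}

/-- The palindrome complexity function `P L`. -/
noncomputable def palCmpl {A : Type*} (a : ℕ → A) (n : ℕ → ℕ) (L : ℕ) : ℕ :=
  Set.ncard {u | u ∈ ToeplitzLang a n ∧ u.length = L ∧ u.reverse = u}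

/-- `Ak a k = {a j : j ≥ k}`. -/
def Ak {A : Type*} (a : ℕ → A) (k : ℕ) : Set A := {x | ∃ j, k ≤ j ∧ a j = x}

/-- The eventual alphabet `A_ev = ⋂ k, A_k`. -/
def Aev {A : Type*} (a : ℕ → A) : Set A := ⋂ k, Ak a k

/-- `Kf a k = min {j > k : {a (k+1), …, a j} = A (k+1)}`. -/
noncomputable def Kf {A : Type*} (a : ℕ → A) (k : ℕ) : ℕ :=
  sInf {j | k < j ∧ {x | ∃ i, k + 1 ≤ i ∧ i ≤ j ∧ a i = x} = Ak a (k + 1)}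

/-- The positions `m i` at which `Kf` increases: `m 0 = 0` and
`m (i+1) = min {j > m i : Kf j > Kf (m i)}`. -/
noncomputable def mseq {A : Type*} (a : ℕ → A) : ℕ → ℕ
  | 0 => 0
  | i + 1 => sInf {j | mseq a i < j ∧ Kf a (mseq a i) < Kf a j}

/-- The repetitivity function `R L`: the least `L'` such that every word of
length `L` of the language is a factor of every word of length `L'`. -/
noncomputable def repet {A : Type*} (a : ℕ → A) (n : ℕ → ℕ) (L : ℕ) : ℕ :=
  sInf {L' | ∀ u ∈ ToeplitzLang a n, u.length = L →
    ∀ w ∈ ToeplitzLang a n, w.length = L' → u <:+: w}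

/-! ### Factors of sequences -/

section Factors

variable {A : Type*}

/-- The factor of length `L` of the sequence `f` that starts at position `i`, as a word. -/
def factorAt (f : ℕ → A) (i L : ℕ) : List A := (List.range' i L).map f

theorem length_factorAt (f : ℕ → A) (i L : ℕ) : (factorAt f i L).length = L := by
  simp [factorAt]

theorem factorAt_add (f : ℕ → A) (i L L' : ℕ) :
    factorAt f i (L + L') = factorAt f i L ++ factorAt f (i + L) L' := by
  rw [factorAt, ← List.range'_append_1, List.map_append, factorAt, factorAt]

theorem factorAt_eq_factorAt_iff {f g : ℕ → A} {i i' L : ℕ} :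
    factorAt f i L = factorAt g i' L ↔ ∀ t < L, f (i + t) = g (i' + t) := by
  simp [factorAt, List.range'_eq_map_range, List.map_inj_left]

theorem infix_factorAt_iff {f : ℕ → A} {i N : ℕ} {u : List A} :
    u <:+: factorAt f i N ↔ ∃ r, r + u.length ≤ N ∧ factorAt f (i + r) u.length = u := by
  constructor
  · rintro ⟨v, w, h⟩
    have hN : v.length + u.length + w.length = N := by
      simpa [length_factorAt, add_assoc] using congrArg List.length h
    rw [← hN, factorAt_add, factorAt_add] at h
    have hvu := (List.append_inj h (by simp [length_factorAt])).1
    exact ⟨v.length, by omega, (List.append_inj hvu (by simp [length_factorAt])).2.symm⟩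
  · rintro ⟨r, hr, hu⟩
    obtain ⟨q, rfl⟩ := Nat.exists_eq_add_of_le hr
    rw [factorAt_add, factorAt_add, hu]
    exact ⟨_, _, rfl⟩

theorem intercalate_replicate_eq_factorAt {f : ℕ → A} {b : A} {p : List A} {N m i : ℕ}
    (hp : ∀ y ≤ N, factorAt f (i + y * (m + 1)) m = p)
    (hb : ∀ y < N, f (i + y * (m + 1) + m) = b) :
    List.intercalate [b] (List.replicate (N + 1) p) = factorAt f i (N * (m + 1) + m) := by
  induction N generalizing i with
  | zero => simpa [List.intercalate] using (hp 0 le_rfl).symm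
  | succ N ih =>
    have shift (y : ℕ) : i + (m + 1) + y * (m + 1) = i + (y + 1) * (m + 1) := by ring
    have htail := ih (i := i + (m + 1))
      (fun y hy => by rw [shift]; exact hp (y + 1) (by omega))
      (fun y hy => by rw [shift]; exact hb (y + 1) (by omega))
    have hletter : factorAt f (i + m) 1 = [b] := by
      simpa [factorAt] using hb 0 (by omega)
    have hblock : factorAt f i m = p := by simpa using hp 0 (by omega)
    have hlen : (N + 1) * (m + 1) + m = m + 1 + (N * (m + 1) + m) := by ring
    rw [hlen, factorAt_add, factorAt_add, hblock, hletter, ← htail,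
      List.replicate_succ, List.replicate_succ, List.intercalate_cons_cons]

end Factors

/-! ### Block periods -/

section BlockPeriod

/-- `blockPeriod n j = n 0 * ⋯ * n (j-1)`, which is `|p (j-1)| + 1`, also for `j = 0`. -/
def blockPeriod (n : ℕ → ℕ) (j : ℕ) : ℕ := ∏ i ∈ Finset.range j, n i

variable {n : ℕ → ℕ}

theorem blockPeriod_zero (n : ℕ → ℕ) : blockPeriod n 0 = 1 := Finset.prod_range_zero _

theorem blockPeriod_succ (n : ℕ → ℕ) (j : ℕ) :
    blockPeriod n (j + 1) = blockPeriod n j * n j := Finset.prod_range_succ _ _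

theorem blockPeriod_dvd_blockPeriod (n : ℕ → ℕ) {i j : ℕ} (h : i ≤ j) :
    blockPeriod n i ∣ blockPeriod n j :=
  Finset.prod_dvd_prod_of_subset _ _ _ (Finset.range_subset_range.2 h)

theorem blockPeriod_pos (hn : ∀ k, 2 ≤ n k) (j : ℕ) : 0 < blockPeriod n j :=
  Finset.prod_pos fun i _ => zero_lt_two.trans_le (hn i)

theorem two_mul_blockPeriod_le (hn : ∀ k, 2 ≤ n k) (j : ℕ) :
    2 * blockPeriod n j ≤ blockPeriod n (j + 1) := by
  rw [blockPeriod_succ, mul_comm]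
  exact Nat.mul_le_mul_left _ (hn j)

theorem blockPeriod_strictMono (hn : ∀ k, 2 ≤ n k) : StrictMono (blockPeriod n) :=
  strictMono_nat_of_lt_succ fun j => by
    have := two_mul_blockPeriod_le hn j
    have := blockPeriod_pos hn j
    omega

theorem exists_maximal_blockPeriod_dvd (hn : ∀ k, 2 ≤ n k) {i j : ℕ} (hi : 0 < i)
    (hj : blockPeriod n j ∣ i) :
    ∃ l, j ≤ l ∧ blockPeriod n l ∣ i ∧ ¬ blockPeriod n (l + 1) ∣ i := by
  by_contra! hall
  have hdvd : ∀ l ≥ j, blockPeriod n l ∣ i := fun l hl => Nat.le_induction hj hall l hl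
  have hle := Nat.le_of_dvd hi (hdvd (i + j + 1) (by omega))
  have := (blockPeriod_strictMono hn).le_apply (x := i + j + 1)
  omega

end BlockPeriod

/-! ### The Toeplitz word -/

section ToeplitzWord

variable {A : Type*} {a : ℕ → A} {n : ℕ → ℕ}

/-- The one-sided Toeplitz word having every block `p k` as a prefix. Its positions are `1, 2, …`;
the letter at `0` is a junk value. -/
noncomputable def toeplitzWord (a : ℕ → A) (n : ℕ → ℕ) (i : ℕ) : A :=
  a (sInf {l | ¬ blockPeriod n (l + 1) ∣ i})

theorem toeplitzWord_eq (a : ℕ → A) {l i : ℕ} (h : blockPeriod n l ∣ i)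
    (h' : ¬ blockPeriod n (l + 1) ∣ i) : toeplitzWord a n i = a l := by
  have hleast : IsLeast {l | ¬ blockPeriod n (l + 1) ∣ i} l :=
    ⟨h', fun b hb => not_lt.1 fun hbl => hb ((blockPeriod_dvd_blockPeriod n hbl).trans h)⟩
  rw [toeplitzWord, hleast.csInf_eq]

theorem toeplitzWord_congr (a : ℕ → A) (hn : ∀ k, 2 ≤ n k) {j i i' : ℕ}
    (hi : ¬ blockPeriod n j ∣ i) (h : i ≡ i' [MOD blockPeriod n j]) :
    toeplitzWord a n i = toeplitzWord a n i' := by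
  have hpos : 0 < i := Nat.pos_of_ne_zero fun h0 => hi (h0 ▸ dvd_zero _)
  obtain ⟨l, -, hl, hl'⟩ := exists_maximal_blockPeriod_dvd hn hpos
    (j := 0) (by simp [blockPeriod_zero])
  have hlj : l < j := not_le.1 fun hjl => hi ((blockPeriod_dvd_blockPeriod n hjl).trans hl)
  have hiff : ∀ r ≤ j, (blockPeriod n r ∣ i ↔ blockPeriod n r ∣ i') :=
    fun r hr => h.dvd_iff (blockPeriod_dvd_blockPeriod n hr)
  rw [toeplitzWord_eq a hl hl',
    toeplitzWord_eq a ((hiff l hlj.le).1 hl) (mt (hiff (l + 1) hlj).2 hl')]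

theorem toeplitzWord_blockPeriod_mul (a : ℕ → A) (hn : ∀ k, 2 ≤ n k) {j z : ℕ}
    (hz : ¬ n j ∣ z) : toeplitzWord a n (blockPeriod n j * z) = a j := by
  refine toeplitzWord_eq a (dvd_mul_right _ _) ?_
  rwa [blockPeriod_succ, Nat.mul_dvd_mul_iff_left (blockPeriod_pos hn j)]

theorem range_toeplitzWord_blockPeriod_mul (a : ℕ → A) (hn : ∀ k, 2 ≤ n k) (j : ℕ) :
    Set.range (fun y => toeplitzWord a n (blockPeriod n j * (y + 1))) = Ak a j := by
  ext x
  constructor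
  · rintro ⟨y, rfl⟩
    obtain ⟨l, hjl, hl, hl'⟩ := exists_maximal_blockPeriod_dvd hn
      (Nat.mul_pos (blockPeriod_pos hn j) y.succ_pos) (dvd_mul_right (blockPeriod n j) (y + 1))
    exact ⟨l, hjl, (toeplitzWord_eq a hl hl').symm⟩
  · rintro ⟨l, hjl, rfl⟩
    obtain ⟨z, hz⟩ := blockPeriod_dvd_blockPeriod n hjl
    obtain ⟨y, rfl⟩ : ∃ y, z = y + 1 := Nat.exists_eq_succ_of_ne_zero fun h0 =>
      (blockPeriod_pos hn l).ne' (by rw [hz, h0, mul_zero])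
    refine ⟨y, ?_⟩
    simp only [← hz]
    exact toeplitzWord_eq a dvd_rfl
      (Nat.not_dvd_of_pos_of_lt (blockPeriod_pos hn l) (blockPeriod_strictMono hn l.lt_succ_self))

theorem toeplitzBlock_eq_factorAt (a : ℕ → A) (hn : ∀ k, 2 ≤ n k) (j : ℕ) :
    ToeplitzBlock a n j = factorAt (toeplitzWord a n) 1 (blockPeriod n (j + 1) - 1) := by
  induction j with
  | zero =>
    rw [ToeplitzBlock, blockPeriod_succ, blockPeriod_zero, one_mul, eq_comm,
      List.eq_replicate_iff]
    refine ⟨length_factorAt _ _ _, fun b hb => ?_⟩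
    obtain ⟨i, hi, rfl⟩ := List.mem_map.1 hb
    rw [List.mem_range'_1] at hi
    rw [← one_mul i, ← blockPeriod_zero n]
    exact toeplitzWord_blockPeriod_mul a hn (Nat.not_dvd_of_pos_of_lt (by omega) (by omega))
  | succ j ih =>
    obtain ⟨m, hm⟩ : ∃ m, blockPeriod n (j + 1) = m + 1 :=
      Nat.exists_eq_succ_of_ne_zero (blockPeriod_pos hn _).ne'
    obtain ⟨N, hN⟩ : ∃ N, n (j + 1) = N + 1 :=
      Nat.exists_eq_succ_of_ne_zero (zero_lt_two.trans_le (hn _)).ne'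
    have hlen : blockPeriod n (j + 2) - 1 = N * (m + 1) + m := by
      rw [blockPeriod_succ, hm, hN, mul_add_one, mul_comm, ← add_assoc, Nat.add_sub_cancel]
    rw [ToeplitzBlock, hN, hlen]
    refine intercalate_replicate_eq_factorAt (fun y _ => ?_) fun y hy => ?_
    · rw [ih, hm, Nat.add_sub_cancel, factorAt_eq_factorAt_iff]
      intro t ht
      refine (toeplitzWord_congr a hn (j := j + 1) ?_ ?_).symm <;> rw [hm]
      · exact Nat.not_dvd_of_pos_of_lt (by omega) (by omega)
      · simp [Nat.ModEq, add_right_comm]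
    · have hhole : 1 + y * (m + 1) + m = blockPeriod n (j + 1) * (y + 1) := by rw [hm]; ring
      rw [hhole]
      exact toeplitzWord_blockPeriod_mul a hn (Nat.not_dvd_of_pos_of_lt (by omega) (by omega))

theorem length_toeplitzBlock_add_one (a : ℕ → A) (hn : ∀ k, 2 ≤ n k) (j : ℕ) :
    (ToeplitzBlock a n j).length + 1 = blockPeriod n (j + 1) := by
  rw [toeplitzBlock_eq_factorAt a hn, length_factorAt, Nat.sub_add_cancel (blockPeriod_pos hn _)]

theorem lenPrev_add_one (a : ℕ → A) (hn : ∀ k, 2 ≤ n k) (j : ℕ) :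
    lenPrev a n j + 1 = blockPeriod n j := by
  cases j with
  | zero => rw [lenPrev, blockPeriod_zero]
  | succ j => exact length_toeplitzBlock_add_one a hn j

theorem mem_toeplitzLang_iff (hn : ∀ k, 2 ≤ n k) {u : List A} :
    u ∈ ToeplitzLang a n ↔ ∃ i, factorAt (toeplitzWord a n) (i + 1) u.length = u := by
  simp only [ToeplitzLang, Set.mem_ofPred_eq, toeplitzBlock_eq_factorAt a hn, infix_factorAt_iff,
    add_comm 1]
  constructor
  · rintro ⟨-, i, -, hu⟩
    exact ⟨i, hu⟩
  · rintro ⟨i, hu⟩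
    have := (blockPeriod_strictMono hn).le_apply (x := i + u.length + 1)
    exact ⟨i + u.length, i, by omega, hu⟩

end ToeplitzWord

/-! ### Filling the holes of a block skeleton -/

section FillHoles

variable {A : Type*} {a : ℕ → A} {n : ℕ → ℕ} {x x' : ℕ → A} {i i' j l L : ℕ}

/-- The word `p (j-1) (x 1) p (j-1) (x 2) p (j-1) ⋯` with positions `1, 2, …`, i.e. the Toeplitz
word with the letters in its holes of level `j`, the multiples of `blockPeriod n j`, replaced by
those of `x`. The index of the holes also starts at `1`. -/
noncomputable def fillHoles (a : ℕ → A) (n : ℕ → ℕ) (j : ℕ) (x : ℕ → A) (i : ℕ) : A :=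
  if blockPeriod n j ∣ i then x (i / blockPeriod n j) else toeplitzWord a n i

theorem fillHoles_blockPeriod_mul (a : ℕ → A) (hn : ∀ k, 2 ≤ n k) (j : ℕ) (x : ℕ → A) (z : ℕ) :
    fillHoles a n j x (blockPeriod n j * z) = x z := by
  rw [fillHoles, if_pos (dvd_mul_right _ _), Nat.mul_div_cancel_left _ (blockPeriod_pos hn j)]

theorem fillHoles_of_not_dvd (x : ℕ → A) (h : ¬ blockPeriod n j ∣ i) :
    fillHoles a n j x i = toeplitzWord a n i := if_neg h

theorem fillHoles_eq_of_lt (x : ℕ → A) (hlj : l < j) (h : blockPeriod n l ∣ i)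
    (h' : ¬ blockPeriod n (l + 1) ∣ i) : fillHoles a n j x i = a l := by
  rw [fillHoles_of_not_dvd x fun hj => h' ((blockPeriod_dvd_blockPeriod n hlj).trans hj),
    toeplitzWord_eq a h h']

theorem toeplitzWord_blockPeriod_mul_add (a : ℕ → A) (hn : ∀ k, 2 ≤ n k) (j y i : ℕ) :
    toeplitzWord a n (blockPeriod n j * y + i) =
      fillHoles a n j (fun z => toeplitzWord a n (blockPeriod n j * (y + z))) i := by
  by_cases h : blockPeriod n j ∣ i
  · obtain ⟨z, rfl⟩ := h
    rw [fillHoles_blockPeriod_mul a hn, mul_add]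
  · rw [fillHoles_of_not_dvd _ h]
    exact (toeplitzWord_congr a hn h (by simp [Nat.ModEq])).symm

theorem factorAt_fillHoles_congr (hn : ∀ k, 2 ≤ n k)
    (h : ∀ z, i ≤ blockPeriod n j * z → blockPeriod n j * z < i + L → x z = x' z) :
    factorAt (fillHoles a n j x) i L = factorAt (fillHoles a n j x') i L := by
  refine factorAt_eq_factorAt_iff.2 fun t ht => ?_
  by_cases hd : blockPeriod n j ∣ i + t
  · obtain ⟨z, hz⟩ := hd
    rw [hz, fillHoles_blockPeriod_mul a hn, fillHoles_blockPeriod_mul a hn,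
      h z (by omega) (by omega)]
  · rw [fillHoles_of_not_dvd x hd, fillHoles_of_not_dvd x' hd]

theorem fillHoles_succ_const_self (a : ℕ → A) (n : ℕ → ℕ) (j : ℕ) :
    fillHoles a n (j + 1) (fun _ => a j) = fillHoles a n j fun _ => a j := by
  funext i
  by_cases h : blockPeriod n (j + 1) ∣ i
  · rw [fillHoles, fillHoles, if_pos h,
      if_pos ((blockPeriod_dvd_blockPeriod n j.le_succ).trans h)]
  · rw [fillHoles_of_not_dvd _ h]
    by_cases h' : blockPeriod n j ∣ i
    · rw [fillHoles, if_pos h', toeplitzWord_eq a h' h]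
    · rw [fillHoles_of_not_dvd _ h']

theorem periodic_fillHoles_const (hn : ∀ k, 2 ≤ n k) (j : ℕ) (b : A) :
    Function.Periodic (fillHoles a n j fun _ => b) (blockPeriod n j) := by
  intro i
  simp only [fillHoles, Nat.dvd_add_self_right]
  split_ifs with h
  · rfl
  · exact (toeplitzWord_congr a hn h (Nat.add_mod_right _ _).symm).symm

end FillHoles

/-! ### Coincidences between factors -/

section Coincidences

variable {A : Type*} {a : ℕ → A} {n : ℕ → ℕ} {x x' : ℕ → A} {i i' j l L : ℕ}

theorem exists_dvd_add_not_dvd_add {M N : ℕ} (hM : 0 < M) (hMN : M < N) (i : ℕ) :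
    ∃ t < 2 * M, M ∣ i + t ∧ ¬ N ∣ i + t := by
  obtain ⟨t, ht, hd⟩ : ∃ t < M, M ∣ i + t := by
    refine ⟨(M - 1) * i % M, Nat.mod_lt _ hM, Nat.dvd_of_mod_eq_zero ?_⟩
    rw [Nat.add_mod_mod, ← one_add_mul, Nat.add_sub_cancel' (Nat.one_le_of_lt hM),
      Nat.mul_mod_right]
  by_cases hN : N ∣ i + t
  · refine ⟨t + M, by omega, ?_, ?_⟩ <;> rw [← add_assoc]
    · exact hd.add dvd_rfl
    · rw [Nat.dvd_add_right hN]
      exact Nat.not_dvd_of_pos_of_lt hM hMN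
  · exact ⟨t, by omega, hd, hN⟩

theorem fillHoles_eq_of_modEq (x : ℕ → A) (hlj : l < j) (hi : blockPeriod n (l + 1) ∣ i)
    (h : i ≡ i' [MOD blockPeriod n l]) (h' : ¬ i ≡ i' [MOD blockPeriod n (l + 1)]) :
    fillHoles a n j x i' = a l :=
  fillHoles_eq_of_lt x hlj
    ((h.dvd_iff dvd_rfl).1 ((blockPeriod_dvd_blockPeriod n l.le_succ).trans hi))
    fun hi' => h' ((Nat.modEq_zero_iff_dvd.2 hi).trans (Nat.modEq_zero_iff_dvd.2 hi').symm)

theorem modEq_of_factorAt_fillHoles_eq (hn : ∀ k, 2 ≤ n k) (ha : ∀ l < j, a l ≠ a (l + 1))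
    (hL : blockPeriod n (j + 1) ≤ L)
    (h : factorAt (fillHoles a n (j + 1) x) i L = factorAt (fillHoles a n (j + 1) x') i' L) :
    i ≡ i' [MOD blockPeriod n j] := by
  -- Otherwise a letter `a (l + 1)` of one factor would face a letter `a l` of the other.
  suffices ∀ l ≤ j, i ≡ i' [MOD blockPeriod n l] from this j le_rfl
  intro l hl
  induction l with
  | zero => rw [blockPeriod_zero]; exact Nat.modEq_one
  | succ l ih =>
    by_contra hne
    obtain ⟨t, ht, htl, htl'⟩ := exists_dvd_add_not_dvd_add (blockPeriod_pos hn (l + 1))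
      (blockPeriod_strictMono hn (l + 1).lt_succ_self) i
    have htL : t < L := by
      have := two_mul_blockPeriod_le hn (l + 1)
      have := (blockPeriod_strictMono hn).monotone (show l + 1 + 1 ≤ j + 1 by omega)
      omega
    refine ha l hl ?_
    calc a l = fillHoles a n (j + 1) x' (i' + t) :=
          (fillHoles_eq_of_modEq x' (by omega) htl ((ih (by omega)).add_right t)
            (mt (Nat.ModEq.add_right_cancel' t) hne)).symm
      _ = fillHoles a n (j + 1) x (i + t) := (factorAt_eq_factorAt_iff.1 h t htL).symm
      _ = a (l + 1) := fillHoles_eq_of_lt x (by omega) htl htl'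

theorem hole_eq_of_factorAt_fillHoles_eq (hn : ∀ k, 2 ≤ n k)
    (h : factorAt (fillHoles a n j x) i L = factorAt (fillHoles a n j x') i L) {z : ℕ}
    (hz : i ≤ blockPeriod n j * z) (hz' : blockPeriod n j * z < i + L) : x z = x' z := by
  have hletter := factorAt_eq_factorAt_iff.1 h (blockPeriod n j * z - i) (by omega)
  rwa [Nat.add_sub_cancel' hz, fillHoles_blockPeriod_mul a hn,
    fillHoles_blockPeriod_mul a hn] at hletter

theorem hole_eq_of_not_modEq (hn : ∀ k, 2 ≤ n k) (ha : ∀ l < j, a l ≠ a (l + 1))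
    (hL : blockPeriod n (j + 1) ≤ L)
    (h : factorAt (fillHoles a n (j + 1) x) i L = factorAt (fillHoles a n (j + 1) x') i' L)
    (hne : ¬ i ≡ i' [MOD blockPeriod n (j + 1)]) {z : ℕ}
    (hz : i ≤ blockPeriod n (j + 1) * z) (hz' : blockPeriod n (j + 1) * z < i + L) :
    x z = a j := by
  obtain ⟨t, ht⟩ := Nat.exists_eq_add_of_le hz
  calc x z = fillHoles a n (j + 1) x (i + t) := by rw [← ht, fillHoles_blockPeriod_mul a hn]
    _ = fillHoles a n (j + 1) x' (i' + t) := factorAt_eq_factorAt_iff.1 h t (by omega)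
    _ = a j := fillHoles_eq_of_modEq x' j.lt_succ_self (ht ▸ dvd_mul_right _ _)
          ((modEq_of_factorAt_fillHoles_eq hn ha hL h).add_right t)
          (mt (Nat.ModEq.add_right_cancel' t) hne)

end Coincidences

/-! ### Alphabets -/

section Alphabets

variable {A : Type*} {a : ℕ → A}

theorem Ak_eq_insert (a : ℕ → A) (k : ℕ) : Ak a k = insert (a k) (Ak a (k + 1)) := by
  change a '' Set.Ici k = insert (a k) (a '' Set.Ici (k + 1))
  rw [← Set.image_insert_eq, ← Set.Ioi_insert]
  rfl

theorem finite_Ak (hA : (Set.range a).Finite) (k : ℕ) : (Ak a k).Finite :=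
  hA.subset (Set.image_subset_range a (Set.Ici k))

theorem ncard_sdiff_singleton_add_one_eq_ncard_insert {s : Set A} (hs : s.Finite) (b : A) :
    (s \ {b}).ncard + 1 = (insert b s).ncard := by
  rw [← Set.insert_sdiff_singleton]
  exact (Set.ncard_insert_of_notMem (by simp) (hs.sdiff)).symm

theorem ncard_inter_singleton (s : Set A) (b : A) [Decidable (b ∈ s)] :
    (s ∩ {b}).ncard = if b ∈ s then 1 else 0 := by
  split_ifs with h
  · rw [Set.inter_singleton_of_mem h, Set.ncard_singleton]
  · rw [Set.inter_singleton_of_notMem h, Set.ncard_empty]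

end Alphabets

/-! ### Factors seeing one or two holes -/

section OneOrTwoHoles

variable {A : Type*} {a : ℕ → A} {n : ℕ → ℕ} {k L : ℕ}

/-- The pairs of letters that fill consecutive holes of level `k` if `n k = 2`. -/
def holePairs (a : ℕ → A) (k : ℕ) : Set (A × A) :=
  {a k} ×ˢ Ak a (k + 1) ∪ Ak a (k + 1) ×ˢ {a k}

theorem range_consecutive_holes (hn : ∀ k, 2 ≤ n k) (hnk : n k = 2) :
    Set.range (fun y => (toeplitzWord a n (blockPeriod n k * (y + 1)),
      toeplitzWord a n (blockPeriod n k * (y + 2)))) = holePairs a k := by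
  have hodd (y : ℕ) : toeplitzWord a n (blockPeriod n k * (2 * y + 1)) = a k :=
    toeplitzWord_blockPeriod_mul a hn (by rw [hnk]; omega)
  have heven (y : ℕ) : blockPeriod n k * (2 * (y + 1)) = blockPeriod n (k + 1) * (y + 1) := by
    rw [blockPeriod_succ, hnk, mul_assoc]
  have hrange := range_toeplitzWord_blockPeriod_mul a hn (k + 1)
  ext ⟨c, d⟩
  constructor
  · rintro ⟨y, hy⟩
    obtain ⟨rfl, rfl⟩ := Prod.mk.inj hy
    obtain ⟨z, rfl | rfl⟩ := Nat.even_or_odd' y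
    · exact Or.inl ⟨hodd z, hrange ▸ ⟨z, congrArg (toeplitzWord a n) (heven z).symm⟩⟩
    · exact Or.inr ⟨hrange ▸ ⟨z, congrArg (toeplitzWord a n) (heven z).symm⟩, hodd (z + 1)⟩
  · simp only [holePairs, ← hrange]
    rintro (⟨rfl, z, rfl⟩ | ⟨⟨z, rfl⟩, rfl⟩)
    · exact ⟨2 * z, Prod.ext (hodd z) (congrArg (toeplitzWord a n) (heven z))⟩
    · exact ⟨2 * z + 1, Prod.ext (congrArg (toeplitzWord a n) (heven z)) (hodd (z + 1))⟩

theorem image_fst_holePairs (a : ℕ → A) (k : ℕ) : Prod.fst '' holePairs a k = Ak a k := by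
  have hne : (Ak a (k + 1)).Nonempty := ⟨a (k + 1), k + 1, le_rfl, rfl⟩
  rw [holePairs, Set.image_union, Set.fst_image_prod _ hne,
    Set.fst_image_prod _ (Set.singleton_nonempty _), Ak_eq_insert a k, Set.insert_eq]

theorem eq_or_eq_of_mem_holePairs {c d : A} (h : (c, d) ∈ holePairs a k) : c = a k ∨ d = a k :=
  h.imp And.left And.right

theorem finite_holePairs (h : (Ak a (k + 1)).Finite) : (holePairs a k).Finite :=
  ((Set.finite_singleton _).prod h).union (h.prod (Set.finite_singleton _))

theorem ncard_holePairs_add_one (h : (Ak a (k + 1)).Finite) :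
    (holePairs a k).ncard + 1 = (Ak a k).ncard + (Ak a (k + 1)).ncard := by
  have hunion : holePairs a k = {a k} ×ˢ Ak a (k + 1) ∪ (Ak a (k + 1) \ {a k}) ×ˢ {a k} := by
    ext ⟨c, d⟩
    simp only [holePairs, Set.mem_union, Set.mem_prod, Set.mem_singleton_iff, Set.mem_sdiff]
    grind
  have hdisj : Disjoint ({a k} ×ˢ Ak a (k + 1)) ((Ak a (k + 1) \ {a k}) ×ˢ {a k}) :=
    Set.disjoint_left.2 fun _ hx hx' => hx'.1.2 hx.1
  rw [hunion, Set.ncard_union_eq hdisj ((Set.finite_singleton _).prod h)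
      (h.sdiff.prod (Set.finite_singleton _)), Set.ncard_prod, Set.ncard_prod,
    Set.ncard_singleton, one_mul, mul_one, add_assoc,
    ncard_sdiff_singleton_add_one_eq_ncard_insert h, ← Ak_eq_insert, add_comm]

/-- The factor of length `L` at offset `s` of `p k c p k c p k ⋯`, where `x = (s, c)`. -/
noncomputable def oneHoleFactor (a : ℕ → A) (n : ℕ → ℕ) (k L : ℕ) (x : ℕ × A) : List A :=
  factorAt (fillHoles a n (k + 1) fun _ => x.2) (x.1 + 1) L

/-- The factor of length `L` at offset `s` of `p k c p k d p k d p k ⋯`, where `x = (s, c, d)`. -/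
noncomputable def twoHoleFactor (a : ℕ → A) (n : ℕ → ℕ) (k L : ℕ) (x : ℕ × A × A) : List A :=
  factorAt (fillHoles a n (k + 1) (Function.update (fun _ => x.2.2) 1 x.2.1)) (x.1 + 1) L

theorem twoHoleFactor_eq_oneHoleFactor (hn : ∀ k, 2 ≤ n k) {s : ℕ} (c d : A)
    (hs : s + L < 2 * blockPeriod n (k + 1)) :
    twoHoleFactor a n k L (s, c, d) = oneHoleFactor a n k L (s, c) := by
  refine factorAt_fillHoles_congr hn fun z hz hz' => ?_
  have hz0 : z ≠ 0 := by rintro rfl; omega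
  have hz2 : z < 2 := by
    have hlt : blockPeriod n (k + 1) * z < blockPeriod n (k + 1) * 2 := by omega
    exact lt_of_mul_lt_mul_left hlt (Nat.zero_le _)
  obtain rfl : z = 1 := by omega
  exact Function.update_self _ _ _

theorem oneHoleFactor_mod (hn : ∀ k, 2 ≤ n k) (s : ℕ) :
    oneHoleFactor a n k L (s % blockPeriod n k, a k) = oneHoleFactor a n k L (s, a k) := by
  simp only [oneHoleFactor, fillHoles_succ_const_self]
  have hper := periodic_fillHoles_const (a := a) hn k (a k)
  refine factorAt_eq_factorAt_iff.2 fun t _ => ?_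
  rw [← hper.map_mod_nat, ← hper.map_mod_nat (s + 1 + t)]
  exact congrArg _ (((Nat.mod_modEq s _).add_right 1).add_right t)

theorem factorAt_toeplitzWord_eq_twoHoleFactor (hn : ∀ k, 2 ≤ n k)
    (hL : L ≤ 2 * blockPeriod n (k + 1)) (y : ℕ) {s : ℕ} (hs : s < blockPeriod n (k + 1)) :
    factorAt (toeplitzWord a n) (blockPeriod n (k + 1) * y + s + 1) L =
      twoHoleFactor a n k L (s, toeplitzWord a n (blockPeriod n (k + 1) * (y + 1)),
        toeplitzWord a n (blockPeriod n (k + 1) * (y + 2))) := by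
  have hshift : factorAt (toeplitzWord a n) (blockPeriod n (k + 1) * y + s + 1) L =
      factorAt (fillHoles a n (k + 1) fun z => toeplitzWord a n (blockPeriod n (k + 1) * (y + z)))
        (s + 1) L :=
    factorAt_eq_factorAt_iff.2 fun t _ => by
      rw [← toeplitzWord_blockPeriod_mul_add a hn, add_assoc, add_assoc, add_assoc]
  rw [hshift]
  refine factorAt_fillHoles_congr hn fun z hz hz' => ?_
  have hz0 : z ≠ 0 := by rintro rfl; omega
  have hz3 : z < 3 := by
    have hlt : blockPeriod n (k + 1) * z < blockPeriod n (k + 1) * 3 := by omega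
    exact lt_of_mul_lt_mul_left hlt (Nat.zero_le _)
  obtain rfl | rfl : z = 1 ∨ z = 2 := by omega
  · rw [Function.update_self]
  · rw [Function.update_of_ne (by decide)]

theorem setOf_factors_eq_image_twoHoleFactor (hn : ∀ k, 2 ≤ n k) (hnk : n (k + 1) = 2)
    (hL : L ≤ 2 * blockPeriod n (k + 1)) :
    {u | u ∈ ToeplitzLang a n ∧ u.length = L} =
      twoHoleFactor a n k L '' (Set.Iio (blockPeriod n (k + 1)) ×ˢ holePairs a (k + 1)) := by
  rw [← range_consecutive_holes hn hnk]
  ext u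
  constructor
  · rintro ⟨hu, rfl⟩
    obtain ⟨i, hi⟩ := (mem_toeplitzLang_iff hn).1 hu
    have hmod := Nat.mod_lt i (blockPeriod_pos hn (k + 1))
    have hu' := factorAt_toeplitzWord_eq_twoHoleFactor (a := a) hn hL
      (i / blockPeriod n (k + 1)) hmod
    rw [Nat.div_add_mod, hi] at hu'
    exact ⟨(_, _, _), ⟨hmod, _, rfl⟩, hu'.symm⟩
  · rintro ⟨⟨s, _⟩, ⟨hs, y, rfl⟩, rfl⟩
    rw [← factorAt_toeplitzWord_eq_twoHoleFactor hn hL y hs]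
    exact ⟨(mem_toeplitzLang_iff hn).2 ⟨_, by rw [length_factorAt]⟩, length_factorAt _ _ _⟩

/-- Representatives `(s, c)` for the factors of length `L` that see one hole only: since
`p k (a k) p k` has period `|p (k-1)| + 1`, larger offsets give nothing new for `c = a k`. -/
def oneHoleParams (a : ℕ → A) (n : ℕ → ℕ) (k L : ℕ) : Set (ℕ × A) :=
  {x | x.1 < 2 * blockPeriod n (k + 1) - L ∧ x.2 ∈ Ak a (k + 1) ∧
    (x.2 = a k → x.1 < blockPeriod n k)}

/-- The parameters `(s, c, d)` of the factors of length `L` that see two holes. -/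
def twoHoleParams (a : ℕ → A) (n : ℕ → ℕ) (k L : ℕ) : Set (ℕ × A × A) :=
  Set.Ico (2 * blockPeriod n (k + 1) - L) (blockPeriod n (k + 1)) ×ˢ holePairs a (k + 1)

theorem image_twoHoleFactor_eq_union (hn : ∀ k, 2 ≤ n k) (hL : blockPeriod n (k + 1) ≤ L) :
    twoHoleFactor a n k L '' (Set.Iio (blockPeriod n (k + 1)) ×ˢ holePairs a (k + 1)) =
      oneHoleFactor a n k L '' oneHoleParams a n k L ∪
        twoHoleFactor a n k L '' twoHoleParams a n k L := by
  apply Set.Subset.antisymm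
  · rintro _ ⟨⟨s, c, d⟩, ⟨hs, hcd⟩, rfl⟩
    by_cases hsL : s < 2 * blockPeriod n (k + 1) - L
    · have hc : c ∈ Ak a (k + 1) := image_fst_holePairs a (k + 1) ▸ ⟨_, hcd, rfl⟩
      rw [twoHoleFactor_eq_oneHoleFactor hn c d (by omega)]
      left
      by_cases hca : c = a k
      · subst hca
        exact ⟨_, ⟨(Nat.mod_le _ _).trans_lt hsL, hc,
          fun _ => Nat.mod_lt s (blockPeriod_pos hn k)⟩, oneHoleFactor_mod hn s⟩
      · exact ⟨_, ⟨hsL, hc, fun h => absurd h hca⟩, rfl⟩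
    · exact Or.inr ⟨_, ⟨⟨not_lt.1 hsL, hs⟩, hcd⟩, rfl⟩
  · refine Set.union_subset ?_ (Set.image_mono (Set.prod_mono_left fun s hs => hs.2))
    rintro _ ⟨⟨s, c⟩, ⟨hs, hc, -⟩, rfl⟩
    obtain ⟨⟨c, d⟩, hcd, rfl⟩ := (image_fst_holePairs a (k + 1)).symm ▸ hc
    simp only at hs
    exact ⟨(s, c, d), ⟨show s < _ by omega, hcd⟩,
      twoHoleFactor_eq_oneHoleFactor hn c d (by omega)⟩

theorem injOn_oneHoleFactor (hn : ∀ k, 2 ≤ n k) (ha : ∀ l < k, a l ≠ a (l + 1))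
    (hL : blockPeriod n (k + 1) < L) :
    Set.InjOn (oneHoleFactor a n k L) (oneHoleParams a n k L) := by
  rintro ⟨s, c⟩ ⟨hs, -, hsc⟩ ⟨s', c'⟩ ⟨hs', -, hsc'⟩ h
  simp only at hs hs' hsc hsc'
  by_cases hmod : s + 1 ≡ s' + 1 [MOD blockPeriod n (k + 1)]
  · obtain rfl : s = s' :=
      (Nat.ModEq.add_right_cancel' 1 hmod).eq_of_lt_of_lt (by omega) (by omega)
    exact Prod.ext rfl (hole_eq_of_factorAt_fillHoles_eq hn h (z := 1) (by omega) (by omega))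
  · have hc : c = a k := hole_eq_of_not_modEq hn ha hL.le h hmod (z := 1) (by omega) (by omega)
    have hc' : c' = a k := hole_eq_of_not_modEq hn ha hL.le h.symm (mt Nat.ModEq.symm hmod)
      (z := 1) (by omega) (by omega)
    have hmod' := modEq_of_factorAt_fillHoles_eq hn ha hL.le h
    have hse : s = s' :=
      (Nat.ModEq.add_right_cancel' 1 hmod').eq_of_lt_of_lt (hsc hc) (hsc' hc')
    rw [hse, hc, hc']

theorem modEq_of_twoHoleFactor_eq (hn : ∀ k, 2 ≤ n k) (ha : ∀ l < k + 1, a l ≠ a (l + 1))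
    {s c d i} {x : ℕ → A} (hx : (s, c, d) ∈ twoHoleParams a n k L)
    (hL : blockPeriod n (k + 1) < L)
    (h : twoHoleFactor a n k L (s, c, d) = factorAt (fillHoles a n (k + 1) x) i L) :
    s + 1 ≡ i [MOD blockPeriod n (k + 1)] := by
  obtain ⟨⟨hs, hs'⟩, hcd⟩ := hx
  simp only at hs hs'
  by_contra hmod
  have hole (z : ℕ) := hole_eq_of_not_modEq hn (fun l hl => ha l (by omega)) hL.le h hmod (z := z)
  have hc : c = a k := by simpa using hole 1 (by simp; omega) (by simp; omega)
  have hd : d = a k := by simpa using hole 2 (by simp; omega) (by simp; omega)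
  rcases eq_or_eq_of_mem_holePairs hcd with h' | h'
  · exact ha k k.lt_succ_self (hc.symm.trans h')
  · exact ha k k.lt_succ_self (hd.symm.trans h')

theorem injOn_twoHoleFactor (hn : ∀ k, 2 ≤ n k) (ha : ∀ l < k + 1, a l ≠ a (l + 1))
    (hL : blockPeriod n (k + 1) < L) :
    Set.InjOn (twoHoleFactor a n k L) (twoHoleParams a n k L) := by
  rintro ⟨s, c, d⟩ hx ⟨s', c', d'⟩ hx' h
  have hmod := modEq_of_twoHoleFactor_eq hn ha hx hL h
  obtain ⟨⟨hs, hsm⟩, -⟩ := hx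
  obtain ⟨⟨-, hsm'⟩, -⟩ := hx'
  simp only at hs hsm hsm'
  obtain rfl : s = s' := (Nat.ModEq.add_right_cancel' 1 hmod).eq_of_lt_of_lt hsm hsm'
  have hole (z : ℕ) := hole_eq_of_factorAt_fillHoles_eq hn h (z := z)
  have hc : c = c' := by simpa using hole 1 (by simp; omega) (by simp; omega)
  have hd : d = d' := by simpa using hole 2 (by simp; omega) (by simp; omega)
  rw [hc, hd]

theorem disjoint_image_oneHoleFactor_image_twoHoleFactor (hn : ∀ k, 2 ≤ n k)
    (ha : ∀ l < k + 1, a l ≠ a (l + 1)) (hL : blockPeriod n (k + 1) < L) :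
    Disjoint (oneHoleFactor a n k L '' oneHoleParams a n k L)
      (twoHoleFactor a n k L '' twoHoleParams a n k L) := by
  rw [Set.disjoint_left]
  rintro _ ⟨⟨s, c⟩, ⟨hs, -⟩, rfl⟩ ⟨⟨s', c', d'⟩, hx', h⟩
  have hmod := modEq_of_twoHoleFactor_eq hn ha hx' hL h
  obtain ⟨⟨hs', hsm'⟩, -⟩ := hx'
  simp only at hs hs' hsm'
  have := (Nat.ModEq.add_right_cancel' 1 hmod).eq_of_lt_of_lt hsm' (by omega)
  omega

end OneOrTwoHoles

/-! ### Counting -/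

section Counting

variable {A : Type*} {a : ℕ → A} {n : ℕ → ℕ} {k L : ℕ}

theorem oneHoleParams_eq_union (a : ℕ → A) (n : ℕ → ℕ) (k L : ℕ) :
    oneHoleParams a n k L =
      Set.Iio (2 * blockPeriod n (k + 1) - L) ×ˢ (Ak a (k + 1) \ {a k}) ∪
        Set.Iio (min (2 * blockPeriod n (k + 1) - L) (blockPeriod n k)) ×ˢ
          (Ak a (k + 1) ∩ {a k}) := by
  ext ⟨s, c⟩
  simp only [oneHoleParams, Set.mem_ofPred_eq, Set.mem_union, Set.mem_prod, Set.mem_Iio,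
    Set.mem_sdiff, Set.mem_inter_iff, Set.mem_singleton_iff, lt_min_iff]
  tauto

theorem finite_oneHoleParams (h : (Ak a (k + 1)).Finite) : (oneHoleParams a n k L).Finite :=
  ((Set.finite_Iio _).prod h).subset fun _ hx => ⟨hx.1, hx.2.1⟩

theorem ncard_oneHoleParams (h : (Ak a (k + 1)).Finite) :
    (oneHoleParams a n k L).ncard =
      (2 * blockPeriod n (k + 1) - L) * (Ak a (k + 1) \ {a k}).ncard +
        min (2 * blockPeriod n (k + 1) - L) (blockPeriod n k) * (Ak a (k + 1) ∩ {a k}).ncard := by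
  rw [oneHoleParams_eq_union, Set.ncard_union_eq _ ((Set.finite_Iio _).prod h.sdiff)
    ((Set.finite_Iio _).prod (h.inter_of_left _)), Set.ncard_prod, Set.ncard_prod,
    Set.ncard_Iio_nat, Set.ncard_Iio_nat]
  exact Set.disjoint_left.2 fun _ hx hx' => hx.2.2 hx'.2.2

theorem finite_twoHoleParams (h : (Ak a (k + 2)).Finite) : (twoHoleParams a n k L).Finite :=
  (Set.finite_Ico _ _).prod (finite_holePairs h)

theorem ncard_twoHoleParams (hL : L ≤ 2 * blockPeriod n (k + 1)) :
    (twoHoleParams a n k L).ncard =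
      (L - blockPeriod n (k + 1)) * (holePairs a (k + 1)).ncard := by
  rw [twoHoleParams, Set.ncard_prod, Set.ncard_Ico_nat]
  congr 1
  omega

theorem cmpl_eq_ncard_add_ncard (hA : (Set.range a).Finite) (hn : ∀ k, 2 ≤ n k)
    (ha : ∀ l < k + 1, a l ≠ a (l + 1)) (hnk : n (k + 1) = 2)
    (hL1 : blockPeriod n (k + 1) < L) (hL2 : L ≤ 2 * blockPeriod n (k + 1)) :
    cmpl a n L = (oneHoleParams a n k L).ncard + (twoHoleParams a n k L).ncard := by
  rw [cmpl, setOf_factors_eq_image_twoHoleFactor hn hnk hL2, image_twoHoleFactor_eq_union hn hL1.le,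
    Set.ncard_union_eq (disjoint_image_oneHoleFactor_image_twoHoleFactor hn ha hL1)
      ((finite_oneHoleParams (finite_Ak hA _)).image _)
      ((finite_twoHoleParams (finite_Ak hA _)).image _),
    (injOn_oneHoleFactor hn (fun l hl => ha l (by omega)) hL1).ncard_image,
    (injOn_twoHoleFactor hn ha hL1).ncard_image]

theorem cmpl_eq_of_blockPeriod_lt (hA : (Set.range a).Finite) (hn : ∀ k, 2 ≤ n k)
    (ha : ∀ l < k + 1, a l ≠ a (l + 1)) (hnk : n (k + 1) = 2)
    (hL1 : blockPeriod n (k + 1) < L) (hL2 : L ≤ 2 * blockPeriod n (k + 1))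
    [Decidable (a k ∈ Ak a (k + 1))] :
    (cmpl a n L : ℤ) =
      ((Ak a (k + 2)).ncard - 1) * L
        + ((Ak a k).ncard - (Ak a (k + 2)).ncard) * blockPeriod n (k + 1)
        + (if a k ∈ Ak a (k + 1) then 1 else 0) *
            (L - blockPeriod n (k + 1) +
              (min (2 * blockPeriod n (k + 1) - L) (blockPeriod n k) : ℕ)) := by
  have hP := finite_Ak hA (k + 1)
  have hAk := ncard_sdiff_singleton_add_one_eq_ncard_insert hP (a k)
  rw [← Ak_eq_insert] at hAk
  have hAk' := Set.ncard_inter_add_ncard_sdiff_eq_ncard (Ak a (k + 1)) {a k} hP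
  rw [ncard_inter_singleton] at hAk'
  have hpairs := ncard_holePairs_add_one (finite_Ak hA (k + 2))
  have hone : ((2 * blockPeriod n (k + 1) - L : ℕ) : ℤ) = 2 * blockPeriod n (k + 1) - L := by omega
  have htwo : ((L - blockPeriod n (k + 1) : ℕ) : ℤ) = L - blockPeriod n (k + 1) := by omega
  rw [cmpl_eq_ncard_add_ncard hA hn ha hnk hL1 hL2, ncard_oneHoleParams hP,
    ncard_twoHoleParams hL2, ncard_inter_singleton]
  zify at hAk hAk' hpairs
  push_cast [hone, htwo]
  rw [← hAk]
  linear_combination (L - blockPeriod n (k + 1) : ℤ) * (hpairs - hAk')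

end Counting

open Classical in
theorem stmt8_general {A : Type*} {a : ℕ → A} {n : ℕ → ℕ} (hA : (Set.range a).Finite)
    (hn : ∀ k, 2 ≤ n k) {k L : ℕ} (ha : ∀ l < k + 1, a l ≠ a (l + 1)) (hnk : n (k + 1) = 2)
    (hL1 : lenPrev a n (k + 1) + 2 ≤ L) (hL2 : L ≤ (ToeplitzBlock a n (k + 1)).length + 1) :
    (cmpl a n L : ℤ) =
      ((Ak a (k + 2)).ncard - 1) * L
        + ((Ak a k).ncard - (Ak a (k + 2)).ncard) * (lenPrev a n (k + 1) + 1)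
        + (if a k ∈ Ak a (k + 1) then 1 else 0) *
            (if L + lenPrev a n k ≤ (ToeplitzBlock a n (k + 1)).length then
              (L : ℤ) - lenPrev a n (k + 1) + lenPrev a n k
            else lenPrev a n (k + 1) + 1) := by
  have hm := lenPrev_add_one a hn (k + 1)
  have he := lenPrev_add_one a hn k
  have h2m := length_toeplitzBlock_add_one a hn (k + 1)
  rw [blockPeriod_succ, hnk] at h2m
  have hT : (if L + lenPrev a n k ≤ (ToeplitzBlock a n (k + 1)).length then
      (L : ℤ) - lenPrev a n (k + 1) + lenPrev a n k else lenPrev a n (k + 1) + 1) =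
        L - blockPeriod n (k + 1) +
          (min (2 * blockPeriod n (k + 1) - L) (blockPeriod n k) : ℕ) := by
    split_ifs <;> omega
  rw [hT, cmpl_eq_of_blockPeriod_lt hA hn ha hnk (by omega) (by omega), ← hm, Nat.cast_succ]

/- STATEMENT 8: the complexity function for `k ≥ 1` with `n k = 2` on the range
`|p (k-1)| + 2 ≤ L ≤ |p k| + 1`. -/
open Classical in
theorem stmt8 {A : Type*} [Fintype A] [Nonempty A]
    (a : ℕ → A) (n : ℕ → ℕ) (hn : ∀ k, 2 ≤ n k) (ha : ∀ k, a k ≠ a (k + 1))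
    (hAev : 2 ≤ (Aev a).ncard)
    (k : ℕ) (hk : 1 ≤ k) (hnk : n k = 2) (L : ℕ)
    (hL1 : lenPrev a n k + 2 ≤ L) (hL2 : L ≤ (ToeplitzBlock a n k).length + 1) :
    (cmpl a n L : ℤ) =
      (((Ak a (k + 1)).ncard : ℤ) - 1) * (L : ℤ)
        + (((Ak a (k - 1)).ncard : ℤ) - ((Ak a (k + 1)).ncard : ℤ)) *
            ((lenPrev a n k : ℤ) + 1)
        + (if a (k - 1) ∈ Ak a k then 1 else 0) *
            (if L + lenPrev a n (k - 1) ≤ (ToeplitzBlock a n k).length then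
              (L : ℤ) - (lenPrev a n k : ℤ) + (lenPrev a n (k - 1) : ℤ)
            else (lenPrev a n k : ℤ) + 1) := by
  obtain ⟨k, rfl⟩ := Nat.exists_eq_add_of_le' hk
  exact stmt8_general (Set.toFinite _) hn (fun l _ => ha l) hnk hL1 hL2
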